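/- For valid chain elements x and y (i.e., terms of α ⊕ β whose left components lie in P and right components lie in Q), the relation 'x ⊑ y or y ⊑ x' is transitive: if x ⊑ y or y ⊑ x, and y ⊑ z or z ⊑ y, then x ⊑ z or z ⊑ x. Consequently, 'sharing a chain' is an equivalence relation on the set of valid chain elements. -/

import Mathlib

def SB.Valid {α β : Type*} (P : Set α) (Q : Set β) : α ⊕ β → Prop
  | Sum.inl p => p ∈ P
  | Sum.inr q => q ∈ Q

def SB.step {α β : Type*} (f : α → β) (g : β → α) : α ⊕ β → α ⊕ β
  | Sum.inl p => Sum.inr (f p)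
  | Sum.inr q => Sum.inl (g q)

def SB.ChainLE {α β : Type*} (f : α → β) (g : β → α) : α ⊕ β → α ⊕ β → Prop :=
  Relation.ReflTransGen (fun x y => y = SB.step f g x)

/-!
Two elements above a common `y` are comparable because steps are deterministic. Two valid elements
below a common `y` are comparable for the dual reason: valid elements step only to valid elements,
and among these a step can be undone in at most one way.
-/

section ReflTransGen

open Relation Relator

variable {γ : Type*} {r : γ → γ → Prop} {S : Set γ} {x y z : γ}

theorem reflTransGen_total_of_leftUnique (hr : LeftUnique r) (hxy : ReflTransGen r x y)
    (hzy : ReflTransGen r z y) : ReflTransGen r x z ∨ ReflTransGen r z x :=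
  (ReflTransGen.total_of_right_unique hr.flip (reflTransGen_swap.2 hxy)
    (reflTransGen_swap.2 hzy)).symm.imp
    reflTransGen_swap.1 reflTransGen_swap.1

theorem reflTransGen_mem_and_of_mem (hS : ∀ ⦃a b⦄, a ∈ S → r a b → b ∈ S) (hx : x ∈ S)
    (hxy : ReflTransGen r x y) : ReflTransGen (fun a b => a ∈ S ∧ r a b) x y := by
  induction hxy using ReflTransGen.head_induction_on with
  | refl => exact .refl
  | head hab _ ih => exact .head ⟨hx, hab⟩ (ih (hS hx hab))

theorem reflTransGen_total_of_leftUnique_on (hS : ∀ ⦃a b⦄, a ∈ S → r a b → b ∈ S)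
    (hr : LeftUnique fun a b => a ∈ S ∧ r a b) (hx : x ∈ S) (hz : z ∈ S)
    (hxy : ReflTransGen r x y) (hzy : ReflTransGen r z y) :
    ReflTransGen r x z ∨ ReflTransGen r z x :=
  (reflTransGen_total_of_leftUnique hr (reflTransGen_mem_and_of_mem hS hx hxy)
    (reflTransGen_mem_and_of_mem hS hz hzy)).imp
    (ReflTransGen.mono (fun _ _ => And.right) _ _) (ReflTransGen.mono (fun _ _ => And.right) _ _)

theorem chain_comparable_trans_general (hright : RightUnique r)
    (hS : ∀ ⦃a b⦄, a ∈ S → r a b → b ∈ S) (hleft : LeftUnique fun a b => a ∈ S ∧ r a b)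
    (hx : x ∈ S) (hz : z ∈ S) (hxy : ReflTransGen r x y ∨ ReflTransGen r y x)
    (hyz : ReflTransGen r y z ∨ ReflTransGen r z y) :
    ReflTransGen r x z ∨ ReflTransGen r z x := by
  rcases hxy with hxy | hyx <;> rcases hyz with hyz | hzy
  · exact .inl (hxy.trans hyz)
  · exact reflTransGen_total_of_leftUnique_on hS hleft hx hz hxy hzy
  · exact ReflTransGen.total_of_right_unique hright hyx hyz
  · exact .inr (hzy.trans hyx)

end ReflTransGen

namespace SB

variable {α β : Type*} {P : Set α} {Q : Set β} {f : α → β} {g : β → α}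

theorem mapsTo_step (hf : Set.MapsTo f P Q) (hg : Set.MapsTo g Q P) :
    Set.MapsTo (step f g) {x | Valid P Q x} {x | Valid P Q x}
  | .inl _, hp => hf hp
  | .inr _, hq => hg hq

theorem injOn_step (hf : Set.InjOn f P) (hg : Set.InjOn g Q) :
    Set.InjOn (step f g) {x | Valid P Q x} := by
  rintro (p | q) hx (p' | q') hy hxy
  · exact congrArg Sum.inl (hf hx hy (Sum.inr.inj hxy))
  · exact absurd hxy Sum.inr_ne_inl
  · exact absurd hxy Sum.inl_ne_inr
  · exact congrArg Sum.inr (hg hx hy (Sum.inl.inj hxy))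

end SB

theorem chain_comparable_trans {α β : Type*} (P : Set α) (Q : Set β)
    (f : α → β) (g : β → α)
    (hfm : Set.MapsTo f P Q) (hfi : Set.InjOn f P)
    (hgm : Set.MapsTo g Q P) (hgi : Set.InjOn g Q)
    (x y z : α ⊕ β) (hx : SB.Valid P Q x) (hy : SB.Valid P Q y)
    (hz : SB.Valid P Q z)
    (hxy : SB.ChainLE f g x y ∨ SB.ChainLE f g y x)
    (hyz : SB.ChainLE f g y z ∨ SB.ChainLE f g z y) :
    SB.ChainLE f g x z ∨ SB.ChainLE f g z x :=
  chain_comparable_trans_general (S := {w | SB.Valid P Q w})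
    (fun _ _ _ hb hc => hb.trans hc.symm)
    (fun _ _ ha hb => hb ▸ SB.mapsTo_step hfm hgm ha)
    (fun _ _ _ ha hb => SB.injOn_step hfi hgi ha.1 hb.1 (ha.2.symm.trans hb.2))
    hx hz hxy hyz
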